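/- Let I ⊆ R be a monomial ideal and let x_i be a variable occurring in G(I). Set q = max{deg_{x_i}(x^a) : x^a ∈ G(I)}, B_i = {x^a ∈ G(I) : deg_{x_i}(x^a) = q}, A_i = G(I) \ B_i, p = max{deg_{x_i}(x^a) : x^a ∈ A_i}, and L = ({x^a/x_i : x^a ∈ B_i} ∪ A_i). Then: (a) if p ≥ 1 and q − p ≥ 2, then depth(R/I) = depth(R/L); (b) if p ≥ 0 and q − p = 1, then depth(R/L) ≥ depth(R/I); (c) if p = 0 and q ≥ 2, then depth(R/I) = depth(R/({x^a/x_i^{q−1} : x^a ∈ B_i} ∪ A_i)). -/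

import Mathlib

/-!
Let `k = R/m` and let `n` be the number of variables. Multiplication by `x = x_i` induces zero on
every `Ext^j(k, -)`. So does the inclusion of a proper monomial ideal `I` into `R`: for `j < n`
because `Ext^j(k, R) = 0`, for `j ≥ n` because `Ext^j(k, -)` is right exact there. The long exact
sequences of `0 → I → R → R/I → 0` and `0 → I → I → I/xI → 0` therefore split into short ones, and
`Ext^j(k, R/I)` vanishes for all `j < d` exactly when `Ext^j(k, R)` and `Ext^j(k, I/xI)` do.

Writing `J_t` for the coefficient ideal of `x^t` in a monomial ideal `I`, the module `I/xI` is the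
direct sum of the quotients `J_t/J_{t-1}`. Lowering the top degree of `x` from `t + 1` to `t`
replaces `J_t` by `J_{t+1}`, giving `L` with `I ≤ L` and `xL ≤ I`. In `I/xI` the summands
`J_t/J_{t-1}` and `J_{t+1}/J_t` appear separately. In `L/xL` they are replaced by the single
extension `J_{t+1}/J_{t-1}`, so the vanishing passes from `I/xI` to `L/xL`, and it passes back when
`J_t = J_{t-1}`.
-/

open MvPolynomial CategoryTheory Opposite

noncomputable section

/-- The polynomial ring `K[x_v : v ∈ σ]` over the field `K`. -/
abbrev MvPoly (K : Type) [Field K] (σ : Type) : Type := MvPolynomial σ K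

variable (K : Type) [Field K] (σ : Type)

/-- The graded maximal ideal `m = (x_v : v ∈ σ)` generated by all the variables. -/
def maxIdeal : Ideal (MvPoly K σ) := Ideal.span (Set.range MvPolynomial.X)

/-- The depth of `R/I` with respect to the graded maximal ideal, defined as
`inf { i | Ext^i(R/m, R/I) ≠ 0 }` (with value `⊤` for the zero module). -/
def depthQ (I : Ideal (MvPoly K σ)) : ℕ∞ :=
  sInf { d : ℕ∞ | ∃ i : ℕ, d = i ∧
    Nontrivial (((Ext (MvPoly K σ) (ModuleCat (MvPoly K σ)) i).obj
      (op (ModuleCat.of (MvPoly K σ) (MvPoly K σ ⧸ maxIdeal K σ)))).obj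
      (ModuleCat.of (MvPoly K σ) (MvPoly K σ ⧸ I))) }

variable {n : ℕ}

/-- The monomial `x^a`. -/
def mono (K : Type) [Field K] {n : ℕ} (a : Fin n →₀ ℕ) : MvPoly K (Fin n) :=
  MvPolynomial.monomial a 1

/-- A monomial ideal: an ideal generated by monomials. -/
def IsMonomialIdeal (I : Ideal (MvPoly K (Fin n))) : Prop :=
  ∃ S : Set (Fin n →₀ ℕ), I = Ideal.span (mono K '' S)

/-- A squarefree exponent vector. -/
def SqfreeExp (a : Fin n →₀ ℕ) : Prop := ∀ i, a i ≤ 1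

/-- A squarefree monomial ideal: an ideal generated by squarefree monomials. -/
def IsSqfreeMonomialIdeal (I : Ideal (MvPoly K (Fin n))) : Prop :=
  ∃ S : Set (Fin n →₀ ℕ), (∀ a ∈ S, SqfreeExp a) ∧ I = Ideal.span (mono K '' S)

end

universe v u w

open scoped Pointwise

section LeftDerivedExt

variable {C : Type u} [Category.{v} C] [Abelian C] {X : C}

theorem preservesFiniteLimits_linearYoneda_obj (R : Type v) [Ring R] [Linear R C] (Y : C) :
    Limits.PreservesFiniteLimits ((linearYoneda R C).obj Y) := by
  have : Limits.PreservesLimits ((linearYoneda R C).obj Y ⋙ forget (ModuleCat R)) :=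
    inferInstanceAs (Limits.PreservesLimits (yoneda.obj Y))
  have := Limits.preservesLimits_of_reflects_of_preserves ((linearYoneda R C).obj Y)
    (forget (ModuleCat R))
  infer_instance

theorem subsingleton_abelianExt_succ_iff [HasExt.{w} C] (P : ProjectiveResolution X) (Y : C)
    (j : ℕ) :
    Subsingleton (Abelian.Ext X Y (j + 1)) ↔
      ∀ f : P.complex.X (j + 1) ⟶ Y, P.complex.d (j + 2) (j + 1) ≫ f = 0 →
        ∃ g : P.complex.X j ⟶ Y, P.complex.d (j + 1) j ≫ g = f := by
  refine ⟨fun _ f hf => (P.extMk_eq_zero_iff f _ rfl hf j rfl).1 (Subsingleton.elim _ _),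
    fun h => subsingleton_of_forall_eq 0 fun α => ?_⟩
  obtain ⟨f, hf, rfl⟩ := P.extMk_surjective α (j + 2) rfl
  exact (P.extMk_eq_zero_iff f _ rfl hf j rfl).2 (h f hf)

variable {R : Type v} [Ring R] [Linear R C] [EnoughProjectives C]

theorem subsingleton_ext_zero_iff (X Y : C) :
    Subsingleton (((_root_.Ext R C 0).obj (op X)).obj Y) ↔ Subsingleton (X ⟶ Y) := by
  have := preservesFiniteLimits_linearYoneda_obj R Y
  have := Limits.preservesFiniteColimits_rightOp ((linearYoneda R C).obj Y)
  let e := (((linearYoneda R C).obj Y).rightOp.leftDerivedZeroIsoSelf.app X).unop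
  exact e.symm.toLinearEquiv.toEquiv.subsingleton_congr

theorem subsingleton_ext_succ_iff (P : ProjectiveResolution X) (Y : C) (j : ℕ) :
    Subsingleton (((_root_.Ext R C (j + 1)).obj (op X)).obj Y) ↔
      ∀ f : P.complex.X (j + 1) ⟶ Y, P.complex.d (j + 2) (j + 1) ≫ f = 0 →
        ∃ g : P.complex.X j ⟶ Y, P.complex.d (j + 1) j ≫ g = f := by
  rw [(P.isoExt (R := R) (j + 1) Y).toLinearEquiv.toEquiv.subsingleton_congr,
    ← ModuleCat.isZero_iff_subsingleton, ← HomologicalComplex.exactAt_iff_isZero_homology,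
    HomologicalComplex.exactAt_iff' _ j (j + 1) (j + 2) (by simp) (by simp),
    ShortComplex.moduleCat_exact_iff]
  rfl

theorem subsingleton_ext_iff_subsingleton_abelianExt [HasExt.{w} C] (X Y : C) (j : ℕ) :
    Subsingleton (((_root_.Ext R C j).obj (op X)).obj Y) ↔ Subsingleton (Abelian.Ext X Y j) := by
  cases j with
  | zero => rw [subsingleton_ext_zero_iff, Abelian.Ext.homEquiv₀.subsingleton_congr]
  | succ j =>
    let P := projectiveResolution X
    rw [subsingleton_ext_succ_iff P, subsingleton_abelianExt_succ_iff P]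

end LeftDerivedExt

section ExtVanishing

variable {R : Type u} [CommRing R]

/-- Vanishing of `Ext^j(X, M)` for an unbundled module `M`. -/
def ExtVanishes (X : ModuleCat.{u} R) (M : Type u) [AddCommGroup M] [Module R M] (j : ℕ) : Prop :=
  Subsingleton (Abelian.Ext X (ModuleCat.of R M) j)

variable {X : ModuleCat.{u} R} {M N P : Type u} [AddCommGroup M] [Module R M]
  [AddCommGroup N] [Module R N] [AddCommGroup P] [Module R P] {j : ℕ}

theorem extVanishes_of_subsingleton [Subsingleton M] : ExtVanishes X M j := by
  refine subsingleton_of_forall_eq 0 fun (u : Abelian.Ext _ _ _) => ?_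
  rw [← u.comp_mk₀_id, (ModuleCat.isZero_of_subsingleton (ModuleCat.of R M)).eq_of_src (𝟙 _) 0,
    Abelian.Ext.mk₀_zero, Abelian.Ext.comp_zero]

theorem ExtVanishes.of_comp_eq_id {s : M →ₗ[R] N} {r : N →ₗ[R] M} (h : r ∘ₗ s = LinearMap.id)
    (hN : ExtVanishes X N j) : ExtVanishes X M j := by
  refine subsingleton_of_forall_eq 0 fun u => ?_
  have hsr : ModuleCat.ofHom s ≫ ModuleCat.ofHom r = 𝟙 (ModuleCat.of R M) := by
    rw [← ModuleCat.ofHom_comp, h, ModuleCat.ofHom_id]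
  rw [← u.comp_mk₀_id, ← hsr, ← Abelian.Ext.mk₀_comp_mk₀,
    ← Abelian.Ext.comp_assoc_of_second_deg_zero,
    hN.elim (u.comp (Abelian.Ext.mk₀ (ModuleCat.ofHom s)) (add_zero _)) 0, Abelian.Ext.zero_comp]

theorem extVanishes_congr (e : M ≃ₗ[R] N) : ExtVanishes X M j ↔ ExtVanishes X N j :=
  ⟨.of_comp_eq_id e.comp_symm, .of_comp_eq_id e.symm_comp⟩

theorem ExtVanishes.left_of_comp_bijective {f : M →ₗ[R] N} {g : N →ₗ[R] P}
    (h : Function.Bijective (g ∘ₗ f)) (hN : ExtVanishes X N j) : ExtVanishes X M j :=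
  hN.of_comp_eq_id (r := (LinearEquiv.ofBijective _ h).symm ∘ₗ g) (s := f) <|
    (LinearEquiv.ofBijective _ h).symm_comp

theorem ExtVanishes.right_of_comp_bijective {f : M →ₗ[R] N} {g : N →ₗ[R] P}
    (h : Function.Bijective (g ∘ₗ f)) (hN : ExtVanishes X N j) : ExtVanishes X P j :=
  hN.of_comp_eq_id (r := g) (s := f ∘ₗ (LinearEquiv.ofBijective _ h).symm) <|
    (LinearEquiv.ofBijective _ h).comp_symm

theorem shortExact_ofHom {f : M →ₗ[R] N} {g : N →ₗ[R] P} (hf : Function.Injective f)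
    (hfg : Function.Exact f g) (hg : Function.Surjective g) :
    (ShortComplex.mk (ModuleCat.ofHom f) (ModuleCat.ofHom g)
      (ModuleCat.hom_ext hfg.linearMap_comp_eq_zero)).ShortExact :=
  ModuleCat.shortComplex_shortExact _ hfg hf hg

theorem ExtVanishes.of_exact {f : M →ₗ[R] N} {g : N →ₗ[R] P} (hf : Function.Injective f)
    (hfg : Function.Exact f g) (hg : Function.Surjective g)
    (hM : ExtVanishes X M j) (hP : ExtVanishes X P j) : ExtVanishes X N j := by
  refine subsingleton_of_forall_eq 0 fun v => ?_
  obtain ⟨u, rfl⟩ := Abelian.Ext.covariant_sequence_exact₂ X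
    (shortExact_ofHom hf hfg hg) v (hP.elim _ _)
  rw [hM.elim u 0, Abelian.Ext.zero_comp]

theorem extVanishes_iff_of_comp_eq_zero {f : M →ₗ[R] N} {g : N →ₗ[R] P}
    (hf : Function.Injective f) (hfg : Function.Exact f g) (hg : Function.Surjective g)
    (h0 : ∀ j, ∀ u : Abelian.Ext X (ModuleCat.of R M) j,
      u.comp (Abelian.Ext.mk₀ (ModuleCat.ofHom f)) (add_zero j) = 0) :
    ExtVanishes X P j ↔ ExtVanishes X N j ∧ ExtVanishes X M (j + 1) := by
  have hS := shortExact_ofHom hf hfg hg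
  refine ⟨fun hP => ⟨subsingleton_of_forall_eq 0 fun v => ?_,
    subsingleton_of_forall_eq 0 fun u => ?_⟩,
    fun ⟨hN, hM⟩ => subsingleton_of_forall_eq 0 fun w => ?_⟩
  · obtain ⟨u, rfl⟩ := Abelian.Ext.covariant_sequence_exact₂ X hS v (hP.elim _ _)
    exact h0 j u
  · obtain ⟨w, rfl⟩ := Abelian.Ext.covariant_sequence_exact₁ X hS u (h0 _ u) rfl
    rw [hP.elim w 0, Abelian.Ext.zero_comp]
  · obtain ⟨v, rfl⟩ := Abelian.Ext.covariant_sequence_exact₃ X hS w rfl (hM.elim _ _)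
    rw [hN.elim v 0, Abelian.Ext.zero_comp]

theorem ext_smul_eq_zero {r : R} (hr : r ∈ Module.annihilator R X) {Y : ModuleCat.{u} R}
    (u : Abelian.Ext X Y j) : r • u = 0 := by
  have h0 : r • 𝟙 X = 0 := by ext y; exact Module.mem_annihilator.1 hr y
  rw [← u.mk₀_id_comp, ← Abelian.Ext.smul_comp, ← Abelian.Ext.mk₀_smul, h0,
    Abelian.Ext.mk₀_zero, Abelian.Ext.zero_comp]

theorem ext_comp_mk₀_smul_eq_zero {r : R} (hr : r ∈ Module.annihilator R X)
    {Y Z : ModuleCat.{u} R} (u : Abelian.Ext X Y j) (f : Y ⟶ Z) :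
    u.comp (Abelian.Ext.mk₀ (r • f)) (add_zero j) = 0 := by
  rw [Abelian.Ext.mk₀_smul, Abelian.Ext.comp_smul, ext_smul_eq_zero hr]

theorem extVanishes_zero_of_isSMulRegular {x : R} (hX : x ∈ Module.annihilator R X)
    (hx : IsSMulRegular M x) : ExtVanishes X M 0 :=
  (Abelian.Ext.homEquiv₀.trans ModuleCat.homEquiv).subsingleton_congr.2 <|
    IsSMulRegular.linearMap_subsingleton_of_mem_annihilator hx hX

/-- In degrees `j ≥ d` the functor `Ext^j(X, -)` is right exact, so a class in `Ext^j(X, I)` lifts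
along a surjection `R^k → I`. The composite `R^k → I → R` is a linear form with coefficients in `I`,
and these annihilate `X`. -/
theorem ext_comp_mk₀_subtype_eq_zero {d : ℕ} [HasProjectiveDimensionLT X (d + 1)] (hj : d ≤ j)
    {I : Ideal R} (hfg : I.FG) (hI : I ≤ Module.annihilator R X)
    (u : Abelian.Ext X (ModuleCat.of R I) j) :
    u.comp (Abelian.Ext.mk₀ (ModuleCat.ofHom I.subtype)) (add_zero j) = 0 := by
  have : Module.Finite R I := Module.Finite.iff_fg.2 hfg
  obtain ⟨k, π, hπ⟩ := Module.Finite.exists_fin' R I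
  have hS := shortExact_ofHom (LinearMap.ker π).subtype_injective
    (LinearMap.exact_subtype_ker_map π) hπ
  obtain ⟨v, rfl⟩ := Abelian.Ext.covariant_sequence_exact₃ X hS u rfl
    (Abelian.Ext.eq_zero_of_hasProjectiveDimensionLT _ (d + 1) (by lia))
  have hsum : ModuleCat.ofHom π ≫ ModuleCat.ofHom I.subtype =
      ∑ l : Fin k, ((π (Pi.single l 1) : I) : R) •
        ModuleCat.ofHom (LinearMap.proj (R := R) (φ := fun _ : Fin k => R) l) := by
    apply ModuleCat.hom_ext
    rw [ModuleCat.hom_sum]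
    refine LinearMap.pi_ext' fun l => LinearMap.ext_ring ?_
    simp [Pi.single_apply]
  have hassoc := Abelian.Ext.comp_assoc_of_second_deg_zero v
    (Abelian.Ext.mk₀ (ModuleCat.ofHom π)) (Abelian.Ext.mk₀ (ModuleCat.ofHom I.subtype))
    (add_zero j)
  refine hassoc.trans ?_
  rw [Abelian.Ext.mk₀_comp_mk₀, hsum, Abelian.Ext.mk₀_sum, Abelian.Ext.comp_sum]
  exact Finset.sum_eq_zero fun l _ => ext_comp_mk₀_smul_eq_zero (hI (π (Pi.single l 1)).2) v _

theorem extVanishes_quotient_iff {d : ℕ} [HasProjectiveDimensionLT X (d + 1)]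
    (hR : ∀ j < d, ExtVanishes X R j) {I : Ideal R} (hfg : I.FG)
    (hI : I ≤ Module.annihilator R X) :
    ExtVanishes X (R ⧸ I) j ↔ ExtVanishes X R j ∧ ExtVanishes X I (j + 1) :=
  extVanishes_iff_of_comp_eq_zero I.subtype_injective (LinearMap.exact_subtype_mkQ I)
    I.mkQ_surjective fun j u => by
      obtain hj | hj := lt_or_ge j d
      · exact (hR j hj).elim _ _
      · exact ext_comp_mk₀_subtype_eq_zero hj hfg hI u

end ExtVanishing

section RegularSequence

open RingTheory.Sequence

variable {R : Type u} [CommRing R]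

theorem hasProjectiveDimensionLT_quotSMulTop {M : Type u} [AddCommGroup M] [Module R M] {r : R}
    (hr : IsSMulRegular M r) {d : ℕ} (hM : HasProjectiveDimensionLT (ModuleCat.of R M) d) :
    HasProjectiveDimensionLT (ModuleCat.of R (QuotSMulTop r M)) (d + 1) :=
  (IsSMulRegular.smulShortComplex_shortExact (M := ModuleCat.of R M) hr).hasProjectiveDimensionLT_X₃
    d hM (hasProjectiveDimensionLT_of_ge (ModuleCat.of R M) d _ d.le_succ)

theorem hasProjectiveDimensionLT_quotient_ofList_smul_top {rs : List R} :
    ∀ {M : Type u} [AddCommGroup M] [Module R M], IsWeaklyRegular M rs →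
      ∀ {d : ℕ}, HasProjectiveDimensionLT (ModuleCat.of R M) d →
        HasProjectiveDimensionLT (ModuleCat.of R (M ⧸ (Ideal.ofList rs • ⊤ : Submodule R M)))
          (d + rs.length) := by
  induction rs with
  | nil =>
    intro M _ _ _ d _
    let e : (M ⧸ (Ideal.ofList ([] : List R) • ⊤ : Submodule R M)) ≃ₗ[R] M :=
      Submodule.quotEquivOfEqBot _ (by rw [Ideal.ofList_nil, Submodule.bot_smul])
    exact hasProjectiveDimensionLT_of_iso e.symm.toModuleIso d
  | cons r rs ih =>
    intro M _ _ hrs d hM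
    obtain ⟨hr, hrs⟩ := (isWeaklyRegular_cons_iff M r rs).1 hrs
    have e := Submodule.quotOfListConsSMulTopEquivQuotSMulTopInner M r rs
    have := ih hrs (hasProjectiveDimensionLT_quotSMulTop hr hM)
    rw [List.length_cons, add_comm rs.length, ← add_assoc]
    exact hasProjectiveDimensionLT_of_iso e.symm.toModuleIso _

theorem hasProjectiveDimensionLT_quotient_ofList {rs : List R} (hrs : IsWeaklyRegular R rs) :
    HasProjectiveDimensionLT (ModuleCat.of R (R ⧸ Ideal.ofList rs)) (rs.length + 1) := by
  have := hasProjectiveDimensionLT_quotient_ofList_smul_top hrs (d := 1) inferInstance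
  rwa [smul_eq_mul, Ideal.mul_top, add_comm] at this

theorem extVanishes_self_of_isRegular [IsNoetherianRing R] {rs : List R} (hrs : IsRegular R rs)
    {j : ℕ} (hj : j < rs.length) : ExtVanishes (ModuleCat.of R (R ⧸ Ideal.ofList rs)) R j :=
  ModuleCat.subsingleton_ext_of_exists_isRegular (Ideal.ofList rs) _
    (by rw [Module.support_eq_zeroLocus, Ideal.annihilator_quotient])
    (ModuleCat.of R R) hrs.top_ne_smul.symm.lt_top rs (fun r hr => Ideal.subset_span hr) hrs j hj

end RegularSequence

section Subquotient

variable {R : Type u} [CommRing R] {E : Type u} [AddCommGroup E] [Module R E]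

/-- The subquotient `M / (N ⊓ M)`, usually written `M / N` when `N ≤ M`. -/
abbrev Subquotient (N M : Submodule R E) : Type u := M ⧸ N.submoduleOf M

variable {N N' M M' P C : Submodule R E}

/-- The map `M / N → M' / N'` induced by the inclusion of `M` in `M'`. -/
def Subquotient.map (hN : N ≤ N') (hM : M ≤ M') : Subquotient N M →ₗ[R] Subquotient N' M' :=
  (N.submoduleOf M).mapQ (N'.submoduleOf M') (Submodule.inclusion hM) fun _ h => hN h

theorem Subquotient.map_mk_eq_zero_iff (hN : N ≤ N') (hM : M ≤ M') (y : M) :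
    map hN hM (Submodule.Quotient.mk y) = 0 ↔ (y : E) ∈ N' :=
  Submodule.Quotient.mk_eq_zero _

theorem Subquotient.map_injective (hN : N ≤ N') (hM : M ≤ M') (h : M ⊓ N' ≤ N) :
    Function.Injective (map hN hM) := by
  refine (injective_iff_map_eq_zero _).2 fun z hz => ?_
  obtain ⟨y, rfl⟩ := Submodule.Quotient.mk_surjective _ z
  exact (Submodule.Quotient.mk_eq_zero _).2 (h ⟨y.2, (map_mk_eq_zero_iff hN hM y).1 hz⟩)

theorem Subquotient.map_surjective (hN : N ≤ N') (hM : M ≤ M') (h : M' ≤ M ⊔ N') :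
    Function.Surjective (map hN hM) := by
  intro z
  obtain ⟨⟨y, hy⟩, rfl⟩ := Submodule.Quotient.mk_surjective _ z
  obtain ⟨m, hm, n, hn, rfl⟩ := Submodule.mem_sup.1 (h hy)
  refine ⟨Submodule.Quotient.mk ⟨m, hm⟩, (Submodule.Quotient.eq _).2 ?_⟩
  change m - (m + n) ∈ N'
  simpa using hn

theorem Subquotient.map_comp_map_bijective (hNC : N ≤ C) (hMP : M ≤ P)
    (hinf : M ⊓ C ≤ N) (hsup : P ≤ M ⊔ C) :
    Function.Bijective (map hNC (le_refl P) ∘ₗ map (le_refl N) hMP) := by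
  have hcomp : map hNC (le_refl P) ∘ₗ map (le_refl N) hMP = map hNC hMP :=
    Submodule.linearMap_qext _ rfl
  rw [hcomp]
  exact ⟨map_injective hNC hMP hinf, map_surjective hNC hMP hsup⟩

theorem Subquotient.exact_map_map (hN : N ≤ M) (hM : M ≤ P) :
    Function.Exact (map (le_refl N) hM) (map hN (le_refl P)) := by
  intro z
  obtain ⟨y, rfl⟩ := Submodule.Quotient.mk_surjective _ z
  rw [map_mk_eq_zero_iff]
  constructor
  · exact fun hy => ⟨Submodule.Quotient.mk ⟨y, hy⟩, rfl⟩
  · rintro ⟨w, hw⟩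
    obtain ⟨m, rfl⟩ := Submodule.Quotient.mk_surjective _ w
    have hmy : (m : E) - y ∈ N := (Submodule.Quotient.eq (N.submoduleOf P)).1 hw
    exact (Submodule.sub_mem_iff_right M m.2).1 (hN hmy)

theorem Subquotient.nonempty_smul_equiv {x : R} (hx : IsSMulRegular E x) (N M : Submodule R E) :
    Nonempty (Subquotient N M ≃ₗ[R] Subquotient (x • N) (x • M)) := by
  let e : M ≃ₗ[R] ↥(x • M) := Submodule.equivMapOfInjective (LinearMap.lsmul R E x) hx M
  refine ⟨Submodule.Quotient.equiv _ _ e ?_⟩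
  ext ⟨y, hy⟩
  constructor
  · rintro ⟨m, hm, hmy⟩
    exact ⟨m, hm, congrArg Subtype.val hmy⟩
  · rintro ⟨n, hn, rfl : x • n = y⟩
    obtain ⟨m, hm, hmn⟩ := hy
    obtain rfl : m = n := hx hmn
    exact ⟨⟨m, hm⟩, hn, rfl⟩

variable {X : ModuleCat.{u} R} {j : ℕ}

theorem extVanishes_subquotient_of_le_of_le (hN : N ≤ M) (hM : M ≤ P)
    (h₁ : ExtVanishes X (Subquotient N M) j) (h₂ : ExtVanishes X (Subquotient M P) j) :
    ExtVanishes X (Subquotient N P) j :=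
  .of_exact (Subquotient.map_injective le_rfl hM inf_le_right) (Subquotient.exact_map_map hN hM)
    (Subquotient.map_surjective hN le_rfl le_sup_left) h₁ h₂

theorem extVanishes_subquotient_iff_of_inf_eq_of_sup_eq (hinf : M ⊓ C = N) (hsup : M ⊔ C = P) :
    ExtVanishes X (Subquotient N P) j ↔
      ExtVanishes X (Subquotient N M) j ∧ ExtVanishes X (Subquotient M P) j := by
  subst hinf hsup
  refine ⟨fun h => ⟨?_, ?_⟩, fun h =>
    extVanishes_subquotient_of_le_of_le inf_le_left le_sup_left h.1 h.2⟩
  · exact h.left_of_comp_bijective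
      (Subquotient.map_comp_map_bijective inf_le_right le_sup_left le_rfl le_rfl)
  · exact h.right_of_comp_bijective (Subquotient.map_comp_map_bijective inf_le_left le_sup_right
      (inf_comm C M).le (sup_comm M C).le)

theorem extVanishes_subquotient_smul_iff {x : R} (hX : x ∈ Module.annihilator R X)
    (hx : IsSMulRegular E x) (M : Submodule R E) :
    ExtVanishes X (Subquotient (x • M) M) j ↔ ExtVanishes X M j ∧ ExtVanishes X M (j + 1) := by
  refine extVanishes_iff_of_comp_eq_zero (f := LinearMap.lsmul R M x)
    (g := ((x • M).submoduleOf M).mkQ) (hx.submodule M x) ?_ (Submodule.mkQ_surjective _)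
    fun j u => ext_comp_mk₀_smul_eq_zero hX u (𝟙 _)
  intro y
  rw [Submodule.mkQ_apply, Submodule.Quotient.mk_eq_zero]
  constructor
  · rintro ⟨m, hm, hmy⟩
    exact ⟨⟨m, hm⟩, Subtype.ext hmy⟩
  · rintro ⟨m, rfl⟩
    exact ⟨m, m.2, rfl⟩

section Lowering

variable {x : R} {I L C C' : Submodule R E}

/-- `I/xI` is the direct sum of `xL/xI`, which is isomorphic to `L/I`, and of `I/xL`; and `L/xL` is
an extension of `L/I` by `I/xL`. -/
theorem ExtVanishes.subquotient_smul_of_lowering (hx : IsSMulRegular E x) (hIL : I ≤ L)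
    (hinf : x • L ⊓ C = x • I) (hsup : x • L ⊔ C = I)
    (h : ExtVanishes X (Subquotient (x • I) I) j) :
    ExtVanishes X (Subquotient (x • L) L) j := by
  obtain ⟨e⟩ := Subquotient.nonempty_smul_equiv hx I L
  obtain ⟨hxL, hI⟩ := (extVanishes_subquotient_iff_of_inf_eq_of_sup_eq hinf hsup).1 h
  exact extVanishes_subquotient_of_le_of_le (hsup ▸ le_sup_left) hIL hI
    ((extVanishes_congr e).2 hxL)

theorem extVanishes_subquotient_smul_iff_of_lowering (hx : IsSMulRegular E x)
    (hinf : x • L ⊓ C = x • I) (hsup : x • L ⊔ C = I) (hinf' : I ⊓ C' = x • L)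
    (hsup' : I ⊔ C' = L) :
    ExtVanishes X (Subquotient (x • I) I) j ↔ ExtVanishes X (Subquotient (x • L) L) j := by
  obtain ⟨e⟩ := Subquotient.nonempty_smul_equiv hx I L
  rw [extVanishes_subquotient_iff_of_inf_eq_of_sup_eq hinf hsup,
    extVanishes_subquotient_iff_of_inf_eq_of_sup_eq hinf' hsup', ← extVanishes_congr e, and_comm]

end Lowering

end Subquotient

section RegularSequenceDepth

open RingTheory.Sequence

variable {R : Type u} [CommRing R] [IsNoetherianRing R] {rs : List R} {I : Ideal R}

theorem forall_lt_extVanishes_quotient_iff (hrs : IsRegular R rs) (hI : I ≤ Ideal.ofList rs)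
    {x : R} (hxrs : x ∈ Ideal.ofList rs) (hx : IsSMulRegular R x) (d : ℕ) :
    (∀ j < d, ExtVanishes (ModuleCat.of R (R ⧸ Ideal.ofList rs)) (R ⧸ I) j) ↔
      (∀ j < d, ExtVanishes (ModuleCat.of R (R ⧸ Ideal.ofList rs)) R j) ∧
      ∀ j < d, ExtVanishes (ModuleCat.of R (R ⧸ Ideal.ofList rs)) (Subquotient (x • I) I) j := by
  have := hasProjectiveDimensionLT_quotient_ofList hrs.1
  have hann : Ideal.ofList rs ≤ Module.annihilator R (ModuleCat.of R (R ⧸ Ideal.ofList rs)) :=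
    Ideal.annihilator_quotient.ge
  have hquot (j : ℕ) := extVanishes_quotient_iff (j := j)
    (fun j => extVanishes_self_of_isRegular hrs) (IsNoetherian.noetherian I) (hI.trans hann)
  have hsub (j : ℕ) := extVanishes_subquotient_smul_iff (j := j) (hann hxrs) hx I
  have h0 : ExtVanishes (ModuleCat.of R (R ⧸ Ideal.ofList rs)) I 0 :=
    extVanishes_zero_of_isSMulRegular (hann hxrs) (hx.submodule I x)
  simp only [hquot, hsub, forall_and]
  refine and_congr_right fun _ => ⟨fun h => ⟨fun j hj => ?_, h⟩, And.right⟩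
  cases j with
  | zero => exact h0
  | succ j => exact h j (Nat.lt_of_succ_lt hj)

end RegularSequenceDepth

section PolynomialRing

open RingTheory.Sequence

theorem isWeaklyRegular_map_X {σ A : Type*} [CommRing A] {l : List σ} (hl : l.Nodup) :
    IsWeaklyRegular (MvPolynomial σ A) (l.map (X : σ → MvPolynomial σ A)) := by
  refine ⟨fun k hk => (isSMulRegular_quotient_iff_mem_of_smul_mem _ _).2 fun f hf => ?_⟩
  rw [List.length_map] at hk
  have hspan : (Ideal.ofList ((l.map (X : σ → MvPolynomial σ A)).take k) • ⊤ : Ideal _) =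
      Ideal.span ((X : σ → MvPolynomial σ A) '' {s | s ∈ l.take k}) := by
    rw [smul_eq_mul, Ideal.mul_top, ← List.map_take, Ideal.ofList]
    congr 1; ext; simp [-List.map_take]
  rw [hspan, mem_ideal_span_X_image] at hf ⊢
  intro m hm
  obtain ⟨s, hs, hms⟩ := hf (Finsupp.single l[k] 1 + m) <| by
    rwa [List.getElem_map, smul_eq_mul, mem_support_iff, coeff_X_mul, ← mem_support_iff]
  have hne : l[k] ≠ s := by
    rintro rfl
    obtain ⟨t, ht, htk⟩ := List.mem_take_iff_getElem.1 hs
    have := hl.getElem_inj_iff.1 htk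
    lia
  exact ⟨s, hs, by simpa [Finsupp.single_apply, hne] using hms⟩

variable {K : Type} [Field K] {σ : Type}

theorem maxIdeal_ne_top : maxIdeal K σ ≠ ⊤ := by
  rw [maxIdeal, ← Set.image_univ, Ideal.ne_top_iff_one, mem_ideal_span_X_image]
  simp

theorem exists_isRegular_ofList_eq_maxIdeal [Finite σ] :
    ∃ rs : List (MvPoly K σ), IsRegular (MvPoly K σ) rs ∧ Ideal.ofList rs = maxIdeal K σ := by
  have := Fintype.ofFinite σ
  have hspan : Ideal.ofList (Finset.univ.toList.map (X : σ → MvPoly K σ)) = maxIdeal K σ := by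
    rw [Ideal.ofList, maxIdeal]
    congr 1; ext; simp
  refine ⟨_, ⟨isWeaklyRegular_map_X Finset.univ.nodup_toList, ?_⟩, hspan⟩
  rw [hspan, smul_eq_mul, Ideal.mul_top]
  exact maxIdeal_ne_top.symm

variable (K σ) in
/-- The residue field `R/m` as a module over the polynomial ring `R`. -/
noncomputable abbrev residueModule : ModuleCat (MvPoly K σ) :=
  ModuleCat.of (MvPoly K σ) (MvPoly K σ ⧸ maxIdeal K σ)

theorem natCast_le_depthQ_iff {I : Ideal (MvPoly K σ)} {d : ℕ} :
    (d : ℕ∞) ≤ depthQ K σ I ↔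
      ∀ j < d, ExtVanishes (residueModule K σ) (MvPoly K σ ⧸ I) j := by
  simp only [depthQ, le_sInf_iff, Set.mem_ofPred_eq, ← not_subsingleton_iff_nontrivial,
    subsingleton_ext_iff_subsingleton_abelianExt]
  constructor
  · intro h j hj
    by_contra hne
    exact (Nat.cast_le.1 (h _ ⟨j, rfl, hne⟩)).not_gt hj
  · rintro h _ ⟨j, rfl, hne⟩
    exact Nat.cast_le.2 (not_lt.1 fun hj => hne (h j hj))

theorem depthQ_top : depthQ K σ ⊤ = ⊤ :=
  ENat.eq_top_iff_forall_ge.2 fun _ => natCast_le_depthQ_iff.2 fun _ _ =>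
    extVanishes_of_subsingleton

variable [Finite σ] {I L C C' : Ideal (MvPoly K σ)}

theorem natCast_le_depthQ_iff_subquotient (hI : I ≤ maxIdeal K σ) (i : σ) {d : ℕ} :
    (d : ℕ∞) ≤ depthQ K σ I ↔
      (∀ j < d, ExtVanishes (residueModule K σ) (MvPoly K σ) j) ∧
      ∀ j < d, ExtVanishes (residueModule K σ) (Subquotient ((X i : MvPoly K σ) • I) I) j := by
  obtain ⟨rs, hrs, hm⟩ := exists_isRegular_ofList_eq_maxIdeal (K := K) (σ := σ)
  have hX : X i ∈ maxIdeal K σ := Ideal.subset_span ⟨i, rfl⟩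
  rw [natCast_le_depthQ_iff, residueModule]
  rw [← hm] at hI hX ⊢
  exact forall_lt_extVanishes_quotient_iff hrs hI hX (isRegular_X.left) d

theorem depthQ_le_of_lowering (i : σ) (hIL : I ≤ L) (hL : L ≤ maxIdeal K σ)
    (hinf : (X i : MvPoly K σ) • L ⊓ C = (X i : MvPoly K σ) • I)
    (hsup : (X i : MvPoly K σ) • L ⊔ C = I) :
    depthQ K σ I ≤ depthQ K σ L := by
  have hx : IsSMulRegular (MvPoly K σ) (X i : MvPoly K σ) := isRegular_X.left
  refine ENat.forall_natCast_le_iff_le.1 fun d => ?_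
  rw [natCast_le_depthQ_iff_subquotient (hIL.trans hL) i, natCast_le_depthQ_iff_subquotient hL i]
  exact And.imp_right fun h j hj => (h j hj).subquotient_smul_of_lowering hx hIL hinf hsup

theorem depthQ_eq_of_lowering (i : σ) (hL : L ≤ maxIdeal K σ)
    (hinf : (X i : MvPoly K σ) • L ⊓ C = (X i : MvPoly K σ) • I)
    (hsup : (X i : MvPoly K σ) • L ⊔ C = I)
    (hinf' : I ⊓ C' = (X i : MvPoly K σ) • L) (hsup' : I ⊔ C' = L) :
    depthQ K σ I = depthQ K σ L := by
  have hx : IsSMulRegular (MvPoly K σ) (X i : MvPoly K σ) := isRegular_X.left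
  have hIL : I ≤ L := hsup' ▸ le_sup_left
  refine ENat.eq_of_forall_natCast_le_iff fun d => ?_
  simp only [natCast_le_depthQ_iff_subquotient (hIL.trans hL) i,
    natCast_le_depthQ_iff_subquotient hL i,
    extVanishes_subquotient_smul_iff_of_lowering hx hinf hsup hinf' hsup']

end PolynomialRing

section MonomialIdeal

variable (K : Type) [Field K] {σ : Type}

/-- The ideal generated by the monomials with exponent in `S`. -/
noncomputable def monomialIdeal (S : Set (σ →₀ ℕ)) : Ideal (MvPoly K σ) :=
  Ideal.span ((fun a => monomial a 1) '' S)

variable {K} {S T U V : Set (σ →₀ ℕ)}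

theorem mem_monomialIdeal_iff_support_subset (hU : IsUpperSet U) {f : MvPoly K σ} :
    f ∈ monomialIdeal K U ↔ ↑f.support ⊆ U := by
  rw [monomialIdeal, mem_ideal_span_monomial_image]
  exact forall₂_congr fun m _ => ⟨fun ⟨a, ha, ham⟩ => hU ham ha, fun hm => ⟨m, hm, le_rfl⟩⟩

theorem monomialIdeal_upperClosure (S : Set (σ →₀ ℕ)) :
    monomialIdeal K (upperClosure S : Set (σ →₀ ℕ)) = monomialIdeal K S := by
  ext f
  rw [mem_monomialIdeal_iff_support_subset (upperClosure S).upper, monomialIdeal,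
    mem_ideal_span_monomial_image]
  rfl

theorem monomialIdeal_union (S T : Set (σ →₀ ℕ)) :
    monomialIdeal K (S ∪ T) = monomialIdeal K S ⊔ monomialIdeal K T := by
  rw [monomialIdeal, Set.image_union, Ideal.span_union]
  rfl

theorem monomialIdeal_inter (hU : IsUpperSet U) (hV : IsUpperSet V) :
    monomialIdeal K (U ∩ V) = monomialIdeal K U ⊓ monomialIdeal K V := by
  ext f
  simp only [Submodule.mem_inf, mem_monomialIdeal_iff_support_subset, hU, hV, hU.inter hV,
    Set.subset_inter_iff]

theorem X_smul_monomialIdeal (i : σ) (S : Set (σ →₀ ℕ)) :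
    (X i : MvPoly K σ) • monomialIdeal K S =
      monomialIdeal K ((Finsupp.single i 1 + ·) '' S) := by
  rw [monomialIdeal, monomialIdeal, ← Submodule.span_smul, ← Set.image_smul, Set.image_image,
    Set.image_image]
  simp only [smul_eq_mul, X, monomial_mul, mul_one]

theorem monomialIdeal_mono (h : S ⊆ T) : monomialIdeal K S ≤ monomialIdeal K T :=
  Ideal.span_mono (Set.image_mono h)

theorem monomialIdeal_eq_top (h : 0 ∈ S) : monomialIdeal K S = ⊤ :=
  (Ideal.eq_top_iff_one _).2 (Ideal.subset_span ⟨0, h, rfl⟩)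

theorem monomialIdeal_le_maxIdeal (h : 0 ∉ S) : monomialIdeal K S ≤ maxIdeal K σ := by
  rw [monomialIdeal, Ideal.span_le]
  rintro _ ⟨a, ha, rfl⟩
  obtain ⟨i, hi⟩ := Finsupp.ne_iff.1 (ne_of_mem_of_not_mem ha h)
  exact Ideal.mem_of_dvd _ (X_dvd_monomial.2 (.inr hi)) (Ideal.subset_span ⟨i, rfl⟩)

end MonomialIdeal

section LowerSlice

variable {σ : Type*} {i : σ} {U : Set (σ →₀ ℕ)} {m n : σ →₀ ℕ} {k : ℕ}

theorem add_single_one_le (h : m ≤ n) (hi : m i < n i) : m + Finsupp.single i 1 ≤ n := by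
  classical
  intro l
  obtain rfl | hl := eq_or_ne i l
  · simpa using hi
  · simpa [hl] using h l

theorem le_of_le_add_single {c : ℕ} (h : m ≤ n + Finsupp.single i c) (hi : m i ≤ n i) :
    m ≤ n := by
  classical
  intro l
  obtain rfl | hl := eq_or_ne i l
  · exact hi
  · simpa [hl] using h l

theorem isUpperSet_image_single_add (i : σ) (hU : IsUpperSet U) :
    IsUpperSet ((Finsupp.single i 1 + ·) '' U) := by
  rintro _ m hm ⟨u, hu, rfl⟩
  obtain ⟨n, rfl⟩ := exists_add_of_le hm
  exact ⟨u + n, hU le_self_add hu, (add_assoc _ _ _).symm⟩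

theorem mem_image_single_add_of_lt (hU : IsUpperSet U) (hm : m ∈ U) (h : m ≤ n)
    (hi : m i < n i) : n ∈ (Finsupp.single i 1 + ·) '' U := by
  obtain ⟨c, rfl⟩ := exists_add_of_le (add_single_one_le h hi)
  exact ⟨m + c, hU le_self_add hm, by simp only [add_assoc, add_left_comm]⟩

theorem exists_single_add_eq_of_pos (h : 0 < m i) : ∃ n, Finsupp.single i 1 + n = m :=
  (exists_add_of_le (Finsupp.single_le_iff.2 h)).imp fun _ => Eq.symm

variable (i U k) in
/-- On exponent vectors: the slice of `U` of degree `k` in the variable `i` is replaced by the slice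
of degree `k + 1`, moved down by one. -/
def lowerSlice : Set (σ →₀ ℕ) := {m | m ∈ U ∨ m i = k ∧ m + Finsupp.single i 1 ∈ U}

theorem subset_lowerSlice : U ⊆ lowerSlice i U k := fun _ => Or.inl

theorem isUpperSet_lowerSlice (hU : IsUpperSet U) : IsUpperSet (lowerSlice i U k) := by
  rintro m n hmn (hm | ⟨hi, hm⟩)
  · exact .inl (hU hmn hm)
  · obtain hlt | heq := (hmn i).lt_or_eq
    · exact .inl (hU (add_single_one_le hmn hlt) hm)
    · exact .inr ⟨heq ▸ hi, hU (add_le_add_left hmn _) hm⟩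

theorem image_single_add_lowerSlice_subset (hU : IsUpperSet U) :
    (Finsupp.single i 1 + ·) '' lowerSlice i U k ⊆ U := by
  rintro _ ⟨w, hw | hw, rfl⟩
  · exact hU le_add_self hw
  · simpa only [add_comm w] using hw.2

variable (i U k) in
/-- With `e` the unit vector at `i`, a complement of `e + lowerSlice i U k` in `U` relative to
`e + U`: the two sets have union `U` and intersection `e + U`. -/
def shiftCompl : Set (σ →₀ ℕ) :=
  {m | m ∈ U ∧ (m i = k + 1 → m ∈ (Finsupp.single i 1 + ·) '' U)}

variable (i U k) in
/-- With `e` the unit vector at `i`, a complement of `U` in `lowerSlice i U k` relative to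
`e + lowerSlice i U k`: the two sets have union `lowerSlice i U k`, and in the situation of
`inter_lowerSliceCompl` their intersection is `e + lowerSlice i U k`. -/
def lowerSliceCompl : Set (σ →₀ ℕ) :=
  {m | m ∈ lowerSlice i U k ∧ (m i = k ∨ m ∈ (Finsupp.single i 1 + ·) '' lowerSlice i U k)}

theorem isUpperSet_shiftCompl (hU : IsUpperSet U) : IsUpperSet (shiftCompl i U k) := by
  rintro m n hmn ⟨hm, hmk⟩
  refine ⟨hU hmn hm, fun hn => ?_⟩
  obtain hlt | heq := (hmn i).lt_or_eq
  · exact mem_image_single_add_of_lt hU hm hmn hlt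
  · exact isUpperSet_image_single_add i hU hmn (hmk (heq.trans hn))

theorem image_lowerSlice_union_shiftCompl (hU : IsUpperSet U) :
    (Finsupp.single i 1 + ·) '' lowerSlice i U k ∪ shiftCompl i U k = U := by
  refine (Set.union_subset (image_single_add_lowerSlice_subset hU) fun _ => And.left).antisymm
    fun m hm => ?_
  by_cases hmk : m i = k + 1
  · obtain ⟨n, rfl⟩ := exists_single_add_eq_of_pos (i := i) (m := m) (by lia)
    exact .inl ⟨n, .inr ⟨by simpa [add_comm 1] using hmk, add_comm _ n ▸ hm⟩, rfl⟩
  · exact .inr ⟨hm, fun h => absurd h hmk⟩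

theorem image_lowerSlice_inter_shiftCompl (hU : IsUpperSet U) :
    (Finsupp.single i 1 + ·) '' lowerSlice i U k ∩ shiftCompl i U k =
      (Finsupp.single i 1 + ·) '' U := by
  ext m
  constructor
  · rintro ⟨⟨w, hw | hw, rfl⟩, -, hmk⟩
    · exact ⟨w, hw, rfl⟩
    · exact hmk (by simp [hw.1, add_comm])
  · rintro ⟨u, hu, rfl⟩
    exact ⟨⟨u, .inl hu, rfl⟩, hU le_add_self hu, fun _ => ⟨u, hu, rfl⟩⟩

theorem isUpperSet_lowerSliceCompl (hU : IsUpperSet U) : IsUpperSet (lowerSliceCompl i U k) := by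
  have hW : IsUpperSet (lowerSlice i U k) := isUpperSet_lowerSlice hU
  rintro m n hmn ⟨hm, hmk⟩
  refine ⟨hW hmn hm, or_iff_not_imp_left.2 fun hn => ?_⟩
  obtain hmk | hmk := hmk
  · exact mem_image_single_add_of_lt hW hm hmn ((hmn i).lt_of_ne fun h => hn (h ▸ hmk))
  · exact isUpperSet_image_single_add i hW hmn hmk

theorem union_lowerSliceCompl : U ∪ lowerSliceCompl i U k = lowerSlice i U k := by
  refine (Set.union_subset subset_lowerSlice fun _ => And.left).antisymm fun m hm => ?_
  exact hm.imp id fun h => ⟨.inr h, .inl h.1⟩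

theorem inter_lowerSliceCompl (hU : IsUpperSet U)
    (h : ∀ m, m i = k → m + Finsupp.single i 1 ∈ U → m ∈ U) :
    U ∩ lowerSliceCompl i U (k + 1) = (Finsupp.single i 1 + ·) '' lowerSlice i U (k + 1) := by
  ext m
  constructor
  · rintro ⟨hm, -, hmk | hmk⟩
    · obtain ⟨n, rfl⟩ := exists_single_add_eq_of_pos (i := i) (m := m) (by lia)
      exact ⟨n, .inl (h n (by simpa [add_comm 1] using hmk) (add_comm _ n ▸ hm)), rfl⟩
    · exact hmk
  · rintro ⟨w, hw, rfl⟩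
    exact ⟨image_single_add_lowerSlice_subset hU ⟨w, hw, rfl⟩,
      isUpperSet_lowerSlice hU le_add_self hw, .inr ⟨w, hw, rfl⟩⟩

variable {A B : Set (σ →₀ ℕ)}

theorem lowerSlice_upperClosure_union (hA : ∀ a ∈ A, a i ≤ k) (hB : ∀ b ∈ B, b i = k + 1) :
    lowerSlice i (upperClosure (B ∪ A)) k =
      upperClosure ((fun b => b - Finsupp.single i 1) '' B ∪ A) := by
  ext m
  constructor
  · rintro (⟨a, hb | ha, ham⟩ | ⟨hm, a, hb | ha, ham⟩)
    · exact ⟨_, .inl ⟨a, hb, rfl⟩, tsub_le_self.trans ham⟩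
    · exact ⟨a, .inr ha, ham⟩
    · exact ⟨_, .inl ⟨a, hb, rfl⟩, tsub_le_iff_right.2 ham⟩
    · exact ⟨a, .inr ha, le_of_le_add_single ham (hm ▸ hA a ha)⟩
  · rintro ⟨_, ⟨b, hb, rfl⟩ | ha, hm⟩
    · have hbm : b ≤ m + Finsupp.single i 1 := tsub_le_iff_right.1 hm
      have hk : k + 1 ≤ m i + 1 := by simpa [hB b hb] using hbm i
      obtain hmk | hmk := eq_or_ne (m i) k
      · exact .inr ⟨hmk, b, .inl hb, hbm⟩
      · exact .inl ⟨b, .inl hb, le_of_le_add_single hbm (by rw [hB b hb]; lia)⟩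
    · exact .inl ⟨_, .inr ha, hm⟩

theorem mem_upperClosure_of_add_single_mem (hA : ∀ a ∈ A, a i ≤ k) (hB : ∀ b ∈ B, k + 1 < b i)
    (hm : m i = k) (h : m + Finsupp.single i 1 ∈ upperClosure (B ∪ A)) :
    m ∈ upperClosure (B ∪ A) := by
  obtain ⟨a, hb | ha, ham⟩ := h
  · have hle : a i ≤ k + 1 := by simpa [hm] using ham i
    exact absurd (hB a hb) hle.not_gt
  · exact ⟨a, .inr ha, le_of_le_add_single ham (hm ▸ hA a ha)⟩

theorem image_tsub_single_image_tsub_single (i : σ) (c d : ℕ) (B : Set (σ →₀ ℕ)) :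
    (fun b => b - Finsupp.single i d) '' ((fun b => b - Finsupp.single i c) '' B) =
      (fun b => b - Finsupp.single i (c + d)) '' B := by
  simp only [Set.image_image, tsub_tsub, Finsupp.single_add]

end LowerSlice

section DepthLowerSlice

variable {K : Type} [Field K] {σ : Type} {i : σ} {U : Set (σ →₀ ℕ)} {k : ℕ}

theorem X_smul_monomialIdeal_lowerSlice_inf (hU : IsUpperSet U) :
    (X i : MvPoly K σ) • monomialIdeal K (lowerSlice i U k) ⊓ monomialIdeal K (shiftCompl i U k) =
      (X i : MvPoly K σ) • monomialIdeal K U := by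
  rw [X_smul_monomialIdeal, X_smul_monomialIdeal, ← image_lowerSlice_inter_shiftCompl hU,
    monomialIdeal_inter (isUpperSet_image_single_add i (isUpperSet_lowerSlice hU))
      (isUpperSet_shiftCompl hU)]

theorem X_smul_monomialIdeal_lowerSlice_sup (hU : IsUpperSet U) :
    (X i : MvPoly K σ) • monomialIdeal K (lowerSlice i U k) ⊔ monomialIdeal K (shiftCompl i U k) =
      monomialIdeal K U := by
  rw [X_smul_monomialIdeal, ← monomialIdeal_union, image_lowerSlice_union_shiftCompl hU]

variable [Finite σ]

theorem depthQ_le_depthQ_lowerSlice (hU : IsUpperSet U) (i : σ) (k : ℕ) :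
    depthQ K σ (monomialIdeal K U) ≤ depthQ K σ (monomialIdeal K (lowerSlice i U k)) := by
  by_cases h0 : 0 ∈ lowerSlice i U k
  · rw [monomialIdeal_eq_top h0, depthQ_top]
    exact le_top
  · exact depthQ_le_of_lowering i (monomialIdeal_mono subset_lowerSlice)
      (monomialIdeal_le_maxIdeal h0) (X_smul_monomialIdeal_lowerSlice_inf hU)
      (X_smul_monomialIdeal_lowerSlice_sup hU)

theorem depthQ_eq_depthQ_lowerSlice (hU : IsUpperSet U)
    (h : ∀ m, m i = k → m + Finsupp.single i 1 ∈ U → m ∈ U) :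
    depthQ K σ (monomialIdeal K U) = depthQ K σ (monomialIdeal K (lowerSlice i U (k + 1))) := by
  by_cases h0 : 0 ∈ lowerSlice i U (k + 1)
  · have h0U : 0 ∈ U := h0.resolve_right fun h => k.succ_ne_zero h.1.symm
    rw [monomialIdeal_eq_top h0, monomialIdeal_eq_top h0U]
  · have hinf : monomialIdeal K U ⊓ monomialIdeal K (lowerSliceCompl i U (k + 1)) =
        (X i : MvPoly K σ) • monomialIdeal K (lowerSlice i U (k + 1)) := by
      rw [X_smul_monomialIdeal, ← monomialIdeal_inter hU (isUpperSet_lowerSliceCompl hU),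
        inter_lowerSliceCompl hU h]
    have hsup : monomialIdeal K U ⊔ monomialIdeal K (lowerSliceCompl i U (k + 1)) =
        monomialIdeal K (lowerSlice i U (k + 1)) := by
      rw [← monomialIdeal_union, union_lowerSliceCompl]
    exact depthQ_eq_of_lowering i (monomialIdeal_le_maxIdeal h0)
      (X_smul_monomialIdeal_lowerSlice_inf hU) (X_smul_monomialIdeal_lowerSlice_sup hU) hinf hsup

variable (K) {A B : Set (σ →₀ ℕ)}

theorem depthQ_le_depthQ_tsub_single_one (hA : ∀ a ∈ A, a i ≤ k) (hB : ∀ b ∈ B, b i = k + 1) :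
    depthQ K σ (monomialIdeal K (B ∪ A)) ≤
      depthQ K σ (monomialIdeal K ((fun b => b - Finsupp.single i 1) '' B ∪ A)) := by
  rw [← monomialIdeal_upperClosure (B ∪ A), ← monomialIdeal_upperClosure (_ '' B ∪ A),
    ← lowerSlice_upperClosure_union hA hB]
  exact depthQ_le_depthQ_lowerSlice (upperClosure _).upper i k

theorem depthQ_eq_depthQ_tsub_single_one (hA : ∀ a ∈ A, a i ≤ k) (hB : ∀ b ∈ B, b i = k + 2) :
    depthQ K σ (monomialIdeal K (B ∪ A)) =
      depthQ K σ (monomialIdeal K ((fun b => b - Finsupp.single i 1) '' B ∪ A)) := by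
  rw [← monomialIdeal_upperClosure (B ∪ A), ← monomialIdeal_upperClosure (_ '' B ∪ A),
    ← lowerSlice_upperClosure_union (fun a ha => (hA a ha).trans k.le_succ) hB]
  exact depthQ_eq_depthQ_lowerSlice (upperClosure _).upper fun m hm =>
    mem_upperClosure_of_add_single_mem hA (fun b hb => (hB b hb).ge) hm

end DepthLowerSlice

theorem stmt6_general (K : Type) [Field K] {σ : Type} [Finite σ] (i : σ) (A B : Set (σ →₀ ℕ))
    (p q c : ℕ) (hA : ∀ a ∈ A, a i ≤ p) (hB : ∀ b ∈ B, b i = q) :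
    (p + c ≤ q → depthQ K σ (monomialIdeal K (B ∪ A)) ≤
      depthQ K σ (monomialIdeal K ((fun b => b - Finsupp.single i c) '' B ∪ A))) ∧
    (p + c < q → depthQ K σ (monomialIdeal K (B ∪ A)) =
      depthQ K σ (monomialIdeal K ((fun b => b - Finsupp.single i c) '' B ∪ A))) := by
  induction c generalizing B q with
  | zero => simp
  | succ c ih =>
    have hB' : ∀ b ∈ (fun b => b - Finsupp.single i 1) '' B, b i = q - 1 := by
      rintro _ ⟨b, hb, rfl⟩
      simp [hB b hb]
    obtain ⟨ih_le, ih_eq⟩ := ih _ _ hB'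
    simp only [image_tsub_single_image_tsub_single, add_comm 1 c] at ih_le ih_eq
    refine ⟨fun h => ?_, fun h => ?_⟩
    · refine (depthQ_le_depthQ_tsub_single_one K (k := q - 1) (fun a ha => ?_) fun b hb => ?_).trans
        (ih_le (by lia))
      · exact (hA a ha).trans (by lia)
      · rw [hB b hb]; lia
    · refine (depthQ_eq_depthQ_tsub_single_one K (k := q - 2) (fun a ha => ?_) fun b hb => ?_).trans
        (ih_eq (by lia))
      · exact (hA a ha).trans (by lia)
      · rw [hB b hb]; lia

/-- behaviour of the depth when lowering the top degree of a variable
`x_i` in the minimal generators of a monomial ideal `I`. -/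
theorem stmt6 (K : Type) [Field K] (n : ℕ) (I : Ideal (MvPoly K (Fin n)))
    (S : Finset (Fin n →₀ ℕ)) (hmin : ∀ a ∈ S, ∀ b ∈ S, a ≤ b → a = b)
    (hI : I = Ideal.span (mono K '' ↑S)) (i : Fin n) (hocc : ∃ a ∈ S, a i ≠ 0)
    (q p : ℕ) (hq : q = S.sup fun a => a i)
    (B A : Finset (Fin n →₀ ℕ))
    (hB : B = S.filter fun a => a i = q) (hA : A = S \ B)
    (hp : p = A.sup fun a => a i)
    (L L' : Ideal (MvPoly K (Fin n)))
    (hL : L = Ideal.span (mono K '' ↑((B.image fun a => a - Finsupp.single i 1) ∪ A)))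
    (hL' : L' =
      Ideal.span (mono K '' ↑((B.image fun a => a - Finsupp.single i (q - 1)) ∪ A))) :
    ((1 ≤ p ∧ p + 2 ≤ q) → depthQ K (Fin n) I = depthQ K (Fin n) L) ∧
    (q = p + 1 → depthQ K (Fin n) L ≥ depthQ K (Fin n) I) ∧
    ((p = 0 ∧ 2 ≤ q) → depthQ K (Fin n) I = depthQ K (Fin n) L') := by
  have hAp : ∀ a ∈ (A : Set (Fin n →₀ ℕ)), a i ≤ p := fun a ha =>
    hp ▸ Finset.le_sup (f := fun a => a i) ha
  have hBq : ∀ b ∈ (B : Set (Fin n →₀ ℕ)), b i = q := fun b hb =>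
    (Finset.mem_filter.1 (hB ▸ hb : b ∈ S.filter fun a => a i = q)).2
  have hBA : (B ∪ A : Set (Fin n →₀ ℕ)) = S := by
    rw [← Finset.coe_union, hA, Finset.union_sdiff_of_subset (hB ▸ S.filter_subset _)]
  rw [← hBA] at hI
  rw [Finset.coe_union, Finset.coe_image] at hL hL'
  subst hI hL hL'
  have depth_lower (c : ℕ) := stmt6_general K i A B p q c hAp hBq
  exact ⟨fun h => (depth_lower 1).2 (by lia), fun h => (depth_lower 1).1 (by lia),
    fun h => (depth_lower (q - 1)).2 (by lia)⟩
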